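/- Let d : Fin (m+1) → Fin (m+1) → ℝ be a distance matrix. Then d is Euclidean, i.e. there exist n : ℕ and points y : Fin (m+1) → EuclideanSpace ℝ (Fin n) with dist (y i) (y j) = d i j for all i, j, if and only if the Gram matrix G of d (with base point the last index) is positive semidefinite. -/

import Mathlib

/-!
By the polarization identity, `gramMatrix m d` records the inner products `⟪y i - p, y j - p⟫`
whenever the points `y` realize `d` and `p` is the last of them. It is then a Gram matrix in the
sense of `Matrix.gram`, hence positive semidefinite. Conversely, a positive semidefinite matrix is
the Gram matrix of vectors `v i` in some Euclidean space (`exists_gram_eq_of_posSemidef`); placing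
the base point at the origin and the other points at the `v i` realizes `d`, since the inner
products determine the squared distances and the entries of `d` are nonnegative.
-/

/-- The Gram matrix of a finite (pseudo-)distance matrix on `Fin (m+1)`,
with base point the last index. -/
noncomputable def gramMatrix (m : ℕ) (d : Fin (m + 1) → Fin (m + 1) → ℝ) :
    Matrix (Fin m) (Fin m) ℝ :=
  Matrix.of fun i j =>
    (1 / 2) * ((d i.castSucc (Fin.last m)) ^ 2 + (d j.castSucc (Fin.last m)) ^ 2 -
      (d i.castSucc j.castSucc) ^ 2)

/-- Writing `G = ∑ k, a k (a k)ᵀ`, the vectors are obtained by reading off the `i`-th coordinates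
of the `a k`. -/
theorem exists_gram_eq_of_posSemidef {m : ℕ} {G : Matrix (Fin m) (Fin m) ℝ}
    (hG : G.PosSemidef) :
    ∃ n : ℕ, ∃ v : Fin m → EuclideanSpace ℝ (Fin n), Matrix.gram ℝ v = G := by
  obtain ⟨n, a, rfl⟩ := Matrix.posSemidef_iff_eq_sum_vecMulVec.mp hG
  refine ⟨n, fun i => WithLp.toLp 2 fun k => a k i, ?_⟩
  ext i j
  simp [Matrix.gram_apply, Matrix.sum_apply, Matrix.vecMulVec_apply, PiLp.inner_apply, mul_comm]

theorem gramMatrix_eq_gram {m n : ℕ} {d : Fin (m + 1) → Fin (m + 1) → ℝ}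
    {y : Fin (m + 1) → EuclideanSpace ℝ (Fin n)} (hy : ∀ i j, dist (y i) (y j) = d i j) :
    gramMatrix m d = Matrix.gram ℝ fun i : Fin m => y i.castSucc - y (Fin.last m) := by
  ext i j
  have h := norm_sub_sq_real (y i.castSucc - y (Fin.last m)) (y j.castSucc - y (Fin.last m))
  rw [sub_sub_sub_cancel_right] at h
  simp only [gramMatrix, Matrix.of_apply, Matrix.gram_apply, ← hy, dist_eq_norm]
  linarith

theorem euclidean_iff_gram_posSemidef (m : ℕ)
    (d : Fin (m + 1) → Fin (m + 1) → ℝ)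
    (h_symm : ∀ i j, d i j = d j i) (h_diag : ∀ i, d i i = 0)
    (h_nonneg : ∀ i j, 0 ≤ d i j)
    (h_tri : ∀ i j k, d i j ≤ d i k + d k j) :
    (∃ n : ℕ, ∃ y : Fin (m + 1) → EuclideanSpace ℝ (Fin n),
        ∀ i j, dist (y i) (y j) = d i j) ↔
      (gramMatrix m d).PosSemidef := by
  constructor
  · rintro ⟨n, y, hy⟩
    rw [gramMatrix_eq_gram hy]
    exact Matrix.posSemidef_gram ℝ _
  · intro hG
    obtain ⟨n, v, hv⟩ := exists_gram_eq_of_posSemidef hG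
    have h_inner (i j : Fin m) : inner ℝ (v i) (v j) =
        (1 / 2) * ((d i.castSucc (Fin.last m)) ^ 2 + (d j.castSucc (Fin.last m)) ^ 2 -
          (d i.castSucc j.castSucc) ^ 2) := congrFun₂ hv i j
    have h_norm (i : Fin m) : ‖v i‖ ^ 2 = d i.castSucc (Fin.last m) ^ 2 := by
      rw [← real_inner_self_eq_norm_sq, h_inner, h_diag]
      ring
    refine ⟨n, Fin.snoc (α := fun _ => EuclideanSpace ℝ (Fin n)) v 0, fun i j => ?_⟩
    rw [← sq_eq_sq₀ dist_nonneg (h_nonneg i j)]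
    induction i using Fin.lastCases with
    | last =>
      induction j using Fin.lastCases with
      | last => simp [h_diag]
      | cast j => simp [h_norm, h_symm (Fin.last m)]
    | cast i =>
      induction j using Fin.lastCases with
      | last => simp [h_norm]
      | cast j =>
        simp only [Fin.snoc_castSucc, dist_eq_norm, norm_sub_sq_real, h_norm, h_inner]
        ring
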